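/- There exists a constant c ∈ ℕ such that for every 2-VASS V = (Q,T), every D ∈ ℕ, and every B ∈ {ℕ×[0,D], [0,D]×ℕ}, there exists a finite set Y_B of linear path schemes over V such that: (i) for all states p,q ∈ Q and all u,v ∈ B, p(u) →*_B q(v) holds if and only if p(u) →^{Y_B}_B q(v) holds; (ii) every ρ ∈ Y_B has length at most (|Q| + ‖T‖ + D + 2)^c; and (iii) every ρ ∈ Y_B has at most one cycle. -/

import Mathlib

namespace VASS

/-- Integer vectors of dimension `d`. -/
abbrev Vec (d : ℕ) := Fin d → ℤ

/-- A transition of a `d`-VASS: source state, update vector, target state. -/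
abbrev Trans (d : ℕ) := ℕ × Vec d × ℕ

/-- The norm of a vector: maximum of absolute values of its components. -/
def vnorm {d : ℕ} (z : Vec d) : ℕ := Finset.univ.sup fun i => (z i).natAbs

/-- The norm of a transition set. -/
def tnorm {d : ℕ} (T : Finset (Trans d)) : ℕ := T.sup fun t => vnorm t.2.1

/-- The displacement of a word of transitions. -/
def disp {d : ℕ} (π : List (Trans d)) : Vec d := (π.map fun t => t.2.1).sum

/-- `IsPathFrom p q π` : `π` is a path from `p` to `q`. -/
def IsPathFrom {d : ℕ} : ℕ → ℕ → List (Trans d) → Prop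
  | p, q, [] => p = q
  | p, q, t :: rest => t.1 = p ∧ IsPathFrom t.2.2 q rest

/-- ℕ^d as a subset of ℤ^d. -/
def NatSet (d : ℕ) : Set (Vec d) := {v | ∀ i, 0 ≤ v i}

/-- `p(u) →^π_A q(v)`. -/
def Run {d : ℕ} (T : Finset (Trans d)) (A : Set (Vec d)) (p : ℕ) (u : Vec d)
    (q : ℕ) (v : Vec d) (π : List (Trans d)) : Prop :=
  (∀ t ∈ π, t ∈ T) ∧ IsPathFrom p q π ∧ u ∈ A ∧ v = u + disp π ∧
    ∀ i, 1 ≤ i → i ≤ π.length → u + disp (π.take i) ∈ A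

/-- `p(u) →*_A q(v)`. -/
def Reach {d : ℕ} (T : Finset (Trans d)) (A : Set (Vec d)) (p : ℕ) (u : Vec d)
    (q : ℕ) (v : Vec d) : Prop := ∃ π, Run T A p u q v π

/-- A linear path scheme `α₀ β₁* α₁ ⋯ β_k* α_k`, presented as the initial
segment `α₀` together with the list of pairs `(βᵢ, αᵢ)`. -/
abbrev LPS (d : ℕ) := List (Trans d) × List (List (Trans d) × List (Trans d))

/-- The underlying word `α₀ β₁ α₁ ⋯ β_k α_k` of a linear path scheme. -/
def lpsSupport {d : ℕ} (ρ : LPS d) : List (Trans d) :=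
  ρ.1 ++ (ρ.2.map fun s => s.1 ++ s.2).flatten

/-- The length of a linear path scheme. -/
def lpsLen {d : ℕ} (ρ : LPS d) : ℕ := (lpsSupport ρ).length

/-- The number of cycles of a linear path scheme. -/
def numCycles {d : ℕ} (ρ : LPS d) : ℕ := ρ.2.length

/-- `ρ` is a linear path scheme from `p` to `q` over the transition set `T`:
its underlying word uses transitions from `T` and is a path from `p` to `q`,
and each `βᵢ` is a cycle. -/
def IsLPSFrom {d : ℕ} (T : Finset (Trans d)) (p q : ℕ) (ρ : LPS d) : Prop :=
  (∀ t ∈ lpsSupport ρ, t ∈ T) ∧ IsPathFrom p q (lpsSupport ρ) ∧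
    ∀ s ∈ ρ.2, s.1 ≠ [] ∧ ∃ r, IsPathFrom r r s.1

/-- The word `α₀ β₁^{e₁} α₁ ⋯ β_k^{e_k} α_k` of a linear path scheme. -/
def lpsWord {d : ℕ} (ρ : LPS d) (e : List ℕ) : List (Trans d) :=
  ρ.1 ++ (List.zipWith (fun s n => (List.replicate n s.1).flatten ++ s.2) ρ.2 e).flatten

/-- Membership in the language of a linear path scheme. -/
def InLang {d : ℕ} (ρ : LPS d) (π : List (Trans d)) : Prop :=
  ∃ e : List ℕ, e.length = numCycles ρ ∧ π = lpsWord ρ e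

/-- `p(u) →^S_A q(v)` for a finite set `S` of linear path schemes. -/
def SReach {d : ℕ} (T : Finset (Trans d)) (S : Finset (LPS d)) (A : Set (Vec d))
    (p : ℕ) (u : Vec d) (q : ℕ) (v : Vec d) : Prop :=
  ∃ ρ ∈ S, ∃ π, InLang ρ π ∧ Run T A p u q v π

/-- δ(ρ): the set of displacements of words in the language of `ρ`. -/
def DispSet {d : ℕ} (ρ : LPS d) : Set (Vec d) := {z | ∃ π, InLang ρ π ∧ z = disp π}

/-- A quadrant of ℤ². -/
def IsQuadrant (Z : Set (Vec 2)) : Prop :=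
  ∃ ε : Fin 2 → Bool, Z = {v | ∀ i, if ε i then 0 ≤ v i else v i ≤ 0}

/-- A linear path scheme is zigzag-free if the displacements of all its cycles
lie in a single quadrant. -/
def ZigzagFree (ρ : LPS 2) : Prop :=
  ∃ Z, IsQuadrant Z ∧ ∀ s ∈ ρ.2, disp s.1 ∈ Z

/-- The band `ℕ × [0,D]` as a subset of ℤ². -/
def HBand (D : ℕ) : Set (Vec 2) := {v | 0 ≤ v 0 ∧ 0 ≤ v 1 ∧ v 1 ≤ (D : ℤ)}

/-- The band `[0,D] × ℕ` as a subset of ℤ². -/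
def VBand (D : ℕ) : Set (Vec 2) := {v | 0 ≤ v 0 ∧ v 0 ≤ (D : ℤ) ∧ 0 ≤ v 1}

section Abstract
variable {S α : Type}

def Walk (R : S → α → S → Prop) : S → S → List α → Prop
  | s, s', [] => s = s'
  | s, s', a :: l => ∃ m, R s a m ∧ Walk R m s' l

def Det (R : S → α → S → Prop) : Prop := ∀ s a m m', R s a m → R s a m' → m = m'

def wsum (wt : α → ℤ) (l : List α) : ℤ := (l.map wt).sum

theorem wsum_nil (wt : α → ℤ) : wsum wt [] = 0 := rfl
theorem wsum_cons (wt : α → ℤ) (a : α) (l : List α) : wsum wt (a :: l) = wt a + wsum wt l := by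
  simp [wsum]
theorem wsum_append (wt : α → ℤ) (l l' : List α) :
    wsum wt (l ++ l') = wsum wt l + wsum wt l' := by
  simp [wsum]

theorem walk_append {R : S → α → S → Prop} {s s' : S} {a b : List α} :
    Walk R s s' (a ++ b) ↔ ∃ m, Walk R s m a ∧ Walk R m s' b := by
  induction a generalizing s with
  | nil => simp [Walk]
  | cons x l ih =>
    simp only [List.cons_append, Walk, ih]
    constructor
    · rintro ⟨m, h, m', h1, h2⟩; exact ⟨m', ⟨m, h, h1⟩, h2⟩
    · rintro ⟨m', ⟨m, h, h1⟩, h2⟩; exact ⟨m, h, m', h1, h2⟩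

theorem walk_mono {R R' : S → α → S → Prop} (hR : ∀ s a s', R s a s' → R' s a s')
    {s s' : S} {a : List α} (h : Walk R s s' a) : Walk R' s s' a := by
  induction a generalizing s with
  | nil => exact h
  | cons x l ih => obtain ⟨m, h1, h2⟩ := h; exact ⟨m, hR _ _ _ h1, ih h2⟩

theorem walk_det {R : S → α → S → Prop} (hR : Det R) {s r r' : S} {a : List α}
    (h : Walk R s r a) (h' : Walk R s r' a) : r = r' := by
  induction a generalizing s with
  | nil => exact h.symm.trans h'
  | cons x l ih =>
    obtain ⟨m, h1, h2⟩ := h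
    obtain ⟨m', h1', h2'⟩ := h'
    have := hR _ _ _ _ h1 h1'
    subst this
    exact ih h2 h2'

theorem walk_split {R : S → α → S → Prop} (hR : Det R) (F : Finset S)
    (hF : ∀ s a s', R s a s' → s ∈ F) {s s' : S} {π : List α} (h : Walk R s s' π)
    (hl : F.card < π.length) :
    ∃ a b c r, π = a ++ b ++ c ∧ b ≠ [] ∧ c ≠ [] ∧ Walk R s r a ∧ Walk R r r b ∧ Walk R r s' c := by
  have key : ∀ i : Fin π.length, ∃ r : F, Walk R s r (π.take i) ∧ Walk R r s' (π.drop i) := by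
    intro i
    have h1 := h
    rw [← List.take_append_drop i π] at h1
    obtain ⟨r, hr1, hr2⟩ := walk_append.1 h1
    have hr3 := hr2
    rw [List.drop_eq_getElem_cons i.2] at hr3
    obtain ⟨m, hm, -⟩ := hr3
    exact ⟨⟨r, hF _ _ _ hm⟩, hr1, hr2⟩
  choose f hf1 hf2 using key
  obtain ⟨i, j, hij, hfij⟩ := Fintype.exists_ne_map_eq_of_card_lt f (by simpa using hl)
  wlog hlt : i < j generalizing i j
  · exact this j i hij.symm hfij.symm (lt_of_le_of_ne (not_lt.1 hlt) hij.symm)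
  have e : π.take j = π.take i ++ (π.take j).drop i := by
    have := List.take_append_drop i (π.take j)
    rw [List.take_take, min_eq_left (by exact_mod_cast hlt.le)] at this
    exact this.symm
  have h2 := hf1 j
  rw [e] at h2
  obtain ⟨m, hm1, hm2⟩ := walk_append.1 h2
  have hm := walk_det hR hm1 (hf1 i)
  refine ⟨π.take i, (π.take j).drop i, π.drop j, f i, ?_, ?_, ?_, hf1 i, ?_, ?_⟩
  · rw [← e, List.take_append_drop]
  · intro h0
    have := congrArg List.length h0
    simp at this
    have h3 : (i : ℕ) < j := hlt
    omega
  · intro h0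
    have := congrArg List.length h0
    simp at this
    have h3 := j.2
    omega
  · rw [hm] at hm2
    rw [← hfij] at hm2
    exact hm2
  · rw [hfij]; exact hf2 j

theorem loopfree {R : S → α → S → Prop} (hR : Det R) (F : Finset S)
    (hF : ∀ s a s', R s a s' → s ∈ F) {s s' : S} (I : List α → Prop)
    (hI : ∀ a b c r, Walk R s r a → Walk R r r b → Walk R r s' c → b ≠ [] →
      I (a ++ b ++ c) → I (a ++ c)) (n : ℕ) :
    ∀ π : List α, π.length ≤ n → Walk R s s' π → I π →
    ∃ π', Walk R s s' π' ∧ I π' ∧ π'.length ≤ F.card := by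
  induction n with
  | zero => intro π hn h h2; exact ⟨π, h, h2, by omega⟩
  | succ n ih =>
    intro π hn h h2
    by_cases hl : π.length ≤ F.card
    · exact ⟨π, h, h2, hl⟩
    obtain ⟨a, b, c, r, rfl, hb, -, ha1, hb1, hc1⟩ := walk_split hR F hF h (by omega)
    refine ih (a ++ c) ?_ (walk_append.2 ⟨r, ha1, hc1⟩) (hI _ _ _ _ ha1 hb1 hc1 hb h2)
    have := List.length_pos_iff.2 hb
    simp only [List.length_append] at hn ⊢
    omega

def PR {G : Type} [Add G] (R : S → α → S → Prop) (f : α → G) : S × G → α → S × G → Prop :=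
  fun x a y => R x.1 a y.1 ∧ y.2 = x.2 + f a

theorem modreduce {R : S → α → S → Prop} (hR : Det R) (F : Finset S)
    (hF : ∀ s a s', R s a s' → s ∈ F) (wt : α → ℤ) (m : ℕ) (hm : 0 < m) (σ : ℤ)
    (hσ : ∀ r b, Walk R r r b → b ≠ [] → 0 ≤ σ * wsum wt b)
    {s s' : S} {π : List α} (h : Walk R s s' π) :
    ∃ π', Walk R s s' π' ∧ π'.length ≤ F.card * m ∧ (m : ℤ) ∣ wsum wt π - wsum wt π' ∧
      0 ≤ σ * (wsum wt π - wsum wt π') := by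
  have : NeZero m := ⟨hm.ne'⟩
  let f : α → ZMod m := fun a => (wt a : ZMod m)
  have hdet : Det (PR R f) := by
    rintro s a m m' ⟨h1, h2⟩ ⟨h3, h4⟩
    exact Prod.ext (hR _ _ _ _ h1 h3) (h2.trans h4.symm)
  have up : ∀ (π : List α) (s s' : S) (x : ZMod m), Walk R s s' π →
      Walk (PR R f) (s, x) (s', x + (wsum wt π : ZMod m)) π := by
    intro π
    induction π with
    | nil => intro s s' x h; simp [Walk] at h ⊢; simp [h, wsum_nil]
    | cons a l ih =>
      rintro s s' x ⟨m, h1, h2⟩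
      refine ⟨(m, x + f a), ⟨h1, rfl⟩, ?_⟩
      have := ih m s' (x + f a) h2
      rw [wsum_cons]; push_cast
      rw [← add_assoc]; exact this
  have down : ∀ (π : List α) (x y : S × ZMod m), Walk (PR R f) x y π →
      Walk R x.1 y.1 π ∧ y.2 = x.2 + (wsum wt π : ZMod m) := by
    intro π
    induction π with
    | nil => intro x y h; simp [Walk] at h ⊢; simp [h, wsum_nil]
    | cons a l ih =>
      rintro x y ⟨m, h1, h2⟩
      obtain ⟨h3, h4⟩ := ih _ _ h2
      refine ⟨⟨m.1, h1.1, h3⟩, ?_⟩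
      rw [h4, h1.2, wsum_cons]; push_cast
      rw [← add_assoc]
  obtain ⟨π', h1, h2, h3⟩ := loopfree hdet (F ×ˢ (Finset.univ : Finset (ZMod m)))
    (by rintro s a s' ⟨h1, -⟩; simp; exact hF _ _ _ h1)
    (fun π' => 0 ≤ σ * (wsum wt π - wsum wt π'))
    (by
      intro a b c r ha hb hc hne hi
      have := hσ _ _ (down _ _ _ hb).1 hne
      simp only [wsum_append] at hi ⊢
      nlinarith) π.length π le_rfl (up π s s' 0 h) (by simp)
  obtain ⟨h4, h5⟩ := down _ _ _ h1
  refine ⟨π', h4, ?_, ?_, h2⟩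
  · simpa [ZMod.card] using h3
  · rw [← ZMod.intCast_zmod_eq_zero_iff_dvd]
    simp at h5
    simp [h5]

theorem shortcycle {R : S → α → S → Prop} (hR : Det R) (F : Finset S)
    (hF : ∀ s a s', R s a s' → s ∈ F) (wt : α → ℤ) (σ : ℤ) (n : ℕ) :
    ∀ r b, b.length ≤ n → Walk R r r b → 0 < σ * wsum wt b →
    ∃ r b, Walk R r r b ∧ 0 < σ * wsum wt b ∧ b.length ≤ F.card := by
  induction n with
  | zero => intro r b h1 h2 h3; exact ⟨r, b, h2, h3, by omega⟩
  | succ n ih =>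
    intro r b h1 h2 h3
    by_cases hl : b.length ≤ F.card
    · exact ⟨r, b, h2, h3, hl⟩
    obtain ⟨x, y, z, q, rfl, hb, hz, ha1, hb1, hc1⟩ := walk_split hR F hF h2 (by omega)
    have := List.length_pos_iff.2 hb
    simp only [List.length_append] at h1
    by_cases hp : 0 < σ * wsum wt (x ++ z)
    · exact ih r (x ++ z) (by simp; omega) (walk_append.2 ⟨q, ha1, hc1⟩) hp
    rw [wsum_append] at hp
    simp only [wsum_append] at h3
    refine ih _ y ?_ hb1 (by nlinarith)
    have := List.length_pos_iff.2 hz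
    omega

theorem wsum_bound {R : S → α → S → Prop} (wt : α → ℤ) (M : ℕ)
    (hM : ∀ s a s', R s a s' → |wt a| ≤ M) {s s' : S} {π : List α} (h : Walk R s s' π) :
    |wsum wt π| ≤ π.length * M := by
  induction π generalizing s with
  | nil => simp [wsum_nil]
  | cons a l ih =>
    obtain ⟨m, h1, h2⟩ := h
    have e1 := hM _ _ _ h1
    have e2 := ih h2
    rw [wsum_cons]
    have := abs_add_le (wt a) (wsum wt l)
    simp only [List.length_cons]; push_cast
    linarith

theorem zlemma {R : S → α → S → Prop} (hR : Det R) (F : Finset S)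
    (hF : ∀ s a s', R s a s' → s ∈ F) (wt : α → ℤ) (M : ℕ)
    (hM : ∀ s a s', R s a s' → |wt a| ≤ M) {s s' : S} {π : List α} (h : Walk R s s' π) :
    ∃ (r : S) (a b c : List α) (e : ℕ), Walk R s r a ∧ Walk R r r b ∧ Walk R r s' c ∧
      wsum wt a + e * wsum wt b + wsum wt c = wsum wt π ∧
      a.length + c.length ≤ 3 * (F.card * (F.card * M) ^ 2) + F.card ∧ b.length ≤ F.card := by
  let V : S → Prop := fun r => ∃ a c, π = a ++ c ∧ Walk R s r a ∧ Walk R r s' c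
  let RV : S → α → S → Prop := fun x a y => R x a y ∧ V x ∧ V y
  have hRVR : ∀ x a y, RV x a y → R x a y := fun x a y h => h.1
  have hdet : Det RV := fun s a m m' h h' => hR _ _ _ _ h.1 h'.1
  have hF' : ∀ s a s', RV s a s' → s ∈ F := fun s a s' h => hF _ _ _ h.1
  have hM' : ∀ s a s', RV s a s' → |wt a| ≤ M := fun s a s' h => hM _ _ _ h.1
  have hV : ∀ (c a : List α) (r : S), π = a ++ c → Walk R s r a → Walk R r s' c →
      Walk RV r s' c := by
    intro c
    induction c with
    | nil => intro a r _ _ h; exact h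
    | cons x l ih =>
      intro a r h1 h2 h3
      obtain ⟨m, h4, h5⟩ := h3
      have e1 : π = (a ++ [x]) ++ l := by simp [h1]
      have e2 : Walk R s m (a ++ [x]) := walk_append.2 ⟨r, h2, m, h4, rfl⟩
      exact ⟨m, ⟨h4, ⟨a, _, h1, h2, m, h4, h5⟩, ⟨_, _, e1, e2, h5⟩⟩, ih _ _ e1 e2 h5⟩
  have hπ : Walk RV s s' π := hV π [] s rfl rfl h
  have hsplit : ∀ r b, Walk RV r r b → b ≠ [] →
      ∃ a c, π = a ++ c ∧ Walk RV s r a ∧ Walk RV r s' c := by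
    intro r b hb hne
    have : V r := by
      cases b with
      | nil => exact absurd rfl hne
      | cons x l => obtain ⟨m, h1, -⟩ := hb; exact h1.2.1
    obtain ⟨a, c, e, h1, h2⟩ := this
    have h3 := hπ
    rw [e] at h3
    obtain ⟨m, h4, h5⟩ := walk_append.1 h3
    have := walk_det hR (walk_mono hRVR h4) h1
    subst this
    exact ⟨a, c, e, h4, h5⟩
  have hcyc : ∀ r b, Walk RV r r b → b.length ≤ F.card →
      (wsum wt b).natAbs ≤ F.card * M := by
    intro r b hb hl
    have h1 := wsum_bound wt M hM' hb
    have h2 : (b.length : ℤ) * M ≤ F.card * M := by gcongr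
    zify; linarith
  -- two cycles of opposite signs
  have two : ∀ (r₁ r₂ : S) (a x c b₁ b₂ : List α), Walk RV s r₁ a → Walk RV r₁ r₂ x →
      Walk RV r₂ s' c → Walk RV r₁ r₁ b₁ → Walk RV r₂ r₂ b₂ → b₁.length ≤ F.card →
      b₂.length ≤ F.card → wsum wt b₁ * wsum wt b₂ < 0 → π = a ++ x ++ c →
      ∃ (r : S) (a b c : List α) (e : ℕ), Walk R s r a ∧ Walk R r r b ∧ Walk R r s' c ∧
      wsum wt a + e * wsum wt b + wsum wt c = wsum wt π ∧
      a.length + c.length ≤ 3 * (F.card * (F.card * M) ^ 2) + F.card ∧ b.length ≤ F.card := by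
    intro r₁ r₂ a x c b₁ b₂ ha hx hc hb₁ hb₂ hl₁ hl₂ hneg e
    have hm : 0 < (wsum wt b₁ * wsum wt b₂).natAbs := Int.natAbs_pos.2 hneg.ne
    have hmb : (wsum wt b₁ * wsum wt b₂).natAbs ≤ (F.card * M) ^ 2 := by
      rw [Int.natAbs_mul, sq]
      exact Nat.mul_le_mul (hcyc _ _ hb₁ hl₁) (hcyc _ _ hb₂ hl₂)
    obtain ⟨a', ha1, ha2, ha3, -⟩ := modreduce hdet F hF' wt _ hm 0 (by simp) ha
    obtain ⟨x', hx1, hx2, hx3, -⟩ := modreduce hdet F hF' wt _ hm 0 (by simp) hx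
    obtain ⟨c', hc1, hc2, hc3, -⟩ := modreduce hdet F hF' wt _ hm 0 (by simp) hc
    rw [Int.natAbs_dvd] at ha3 hx3 hc3
    obtain ⟨k, hk⟩ := dvd_add (dvd_add ha3 hx3) hc3
    have hw : wsum wt π = wsum wt a + wsum wt x + wsum wt c := by
      rw [e, wsum_append, wsum_append]
    have hlen : a'.length + x'.length + c'.length ≤ 3 * (F.card * (F.card * M) ^ 2) + F.card := by
      have := Nat.mul_le_mul_left F.card hmb
      omega
    have hsg : 0 ≤ wsum wt b₂ * k ∨ 0 ≤ wsum wt b₁ * k := by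
      by_contra! hcon
      have := mul_pos_of_neg_of_neg hcon.1 hcon.2
      nlinarith [mul_nonneg (sq_nonneg k) (neg_nonneg.2 hneg.le)]
    rcases hsg with hs | hs
    · refine ⟨r₁, a', b₁, x' ++ c', (wsum wt b₂ * k).toNat, walk_mono hRVR ha1,
        walk_mono hRVR hb₁, walk_mono hRVR (walk_append.2 ⟨r₂, hx1, hc1⟩), ?_, ?_, hl₁⟩
      · rw [Int.toNat_of_nonneg hs, wsum_append]; linarith
      · rw [List.length_append]; omega
    · refine ⟨r₂, a' ++ x', b₂, c', (wsum wt b₁ * k).toNat,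
        walk_mono hRVR (walk_append.2 ⟨r₁, ha1, hx1⟩),
        walk_mono hRVR hb₂, walk_mono hRVR hc1, ?_, ?_, hl₂⟩
      · rw [Int.toNat_of_nonneg hs, wsum_append]; linarith
      · rw [List.length_append]; omega
  -- one sign only
  have one : ∀ (r : S) (b : List α), Walk RV r r b → b.length ≤ F.card → wsum wt b ≠ 0 →
      (∀ q d, Walk RV q q d → d ≠ [] → 0 ≤ wsum wt b * wsum wt d) →
      ∃ (r : S) (a b c : List α) (e : ℕ), Walk R s r a ∧ Walk R r r b ∧ Walk R r s' c ∧
      wsum wt a + e * wsum wt b + wsum wt c = wsum wt π ∧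
      a.length + c.length ≤ 3 * (F.card * (F.card * M) ^ 2) + F.card ∧ b.length ≤ F.card := by
    intro r b hb hl h0 hσ
    have hne : b ≠ [] := by rintro rfl; exact h0 rfl
    obtain ⟨a, c, e, ha, hc⟩ := hsplit r b hb hne
    have hm : 0 < (wsum wt b).natAbs := Int.natAbs_pos.2 h0
    have hmb : (wsum wt b).natAbs ≤ (F.card * M) ^ 2 := by
      have := hcyc _ _ hb hl
      nlinarith
    obtain ⟨a', ha1, ha2, ha3, ha4⟩ := modreduce hdet F hF' wt _ hm _ hσ ha
    obtain ⟨c', hc1, hc2, hc3, hc4⟩ := modreduce hdet F hF' wt _ hm _ hσ hc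
    rw [Int.natAbs_dvd] at ha3 hc3
    obtain ⟨k, hk⟩ := dvd_add ha3 hc3
    have hw : wsum wt π = wsum wt a + wsum wt c := by rw [e, wsum_append]
    have hk0 : 0 ≤ k := by
      by_contra! hcon
      have h1 : 0 ≤ wsum wt b * (wsum wt b * k) := by rw [← hk]; linarith
      have h2 : 0 < wsum wt b * wsum wt b := mul_self_pos.2 h0
      nlinarith
    have hlen : a'.length + c'.length ≤ 3 * (F.card * (F.card * M) ^ 2) + F.card := by
      have := Nat.mul_le_mul_left F.card hmb
      omega
    refine ⟨r, a', b, c', k.toNat, walk_mono hRVR ha1, walk_mono hRVR hb, walk_mono hRVR hc1,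
      ?_, hlen, hl⟩
    rw [Int.toNat_of_nonneg hk0]; linarith
  by_cases hpos : ∃ r b, Walk RV r r b ∧ 0 < (1 : ℤ) * wsum wt b
  · obtain ⟨r, b, hb, hb0⟩ := hpos
    obtain ⟨r₁, b₁, hb₁, hp₁, hl₁⟩ := shortcycle hdet F hF' wt 1 _ r b le_rfl hb hb0
    by_cases hnegc : ∃ r b, Walk RV r r b ∧ 0 < (-1 : ℤ) * wsum wt b
    · obtain ⟨r, b, hb, hb0⟩ := hnegc
      obtain ⟨r₂, b₂, hb₂, hp₂, hl₂⟩ := shortcycle hdet F hF' wt (-1) _ r b le_rfl hb hb0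
      obtain ⟨a, c, e, ha, hc⟩ := hsplit r₁ b₁ hb₁ (by rintro rfl; simp [wsum_nil] at hp₁)
      obtain ⟨a2, c2, e2, ha2, hc2⟩ := hsplit r₂ b₂ hb₂ (by rintro rfl; simp [wsum_nil] at hp₂)
      rcases List.append_eq_append_iff.1 (e.symm.trans e2) with ⟨x, hx1, hx2⟩ | ⟨x, hx1, hx2⟩
      · have h3 := ha2
        rw [hx1] at h3
        obtain ⟨m, h4, h5⟩ := walk_append.1 h3
        have := walk_det hdet h4 ha
        subst this
        exact two _ _ a x c2 b₁ b₂ ha h5 hc2 hb₁ hb₂ hl₁ hl₂ (by nlinarith) (by rw [← hx1, ← e2])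
      · have h3 := ha
        rw [hx1] at h3
        obtain ⟨m, h4, h5⟩ := walk_append.1 h3
        have := walk_det hdet h4 ha2
        subst this
        exact two _ _ a2 x c b₂ b₁ ha2 h5 hc hb₂ hb₁ hl₂ hl₁ (by nlinarith) (by rw [← hx1, ← e])
    · refine one r₁ b₁ hb₁ hl₁ (by rintro h; simp [h] at hp₁) ?_
      intro q d hd _
      have : ¬ 0 < (-1 : ℤ) * wsum wt d := fun h => hnegc ⟨q, d, hd, h⟩
      nlinarith
  · have hnp : ∀ q d, Walk RV q q d → wsum wt d ≤ 0 := by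
      intro q d hd
      by_contra! hcon
      exact hpos ⟨q, d, hd, by linarith⟩
    by_cases hnegc : ∃ r b, Walk RV r r b ∧ 0 < (-1 : ℤ) * wsum wt b
    · obtain ⟨r, b, hb, hb0⟩ := hnegc
      obtain ⟨r₂, b₂, hb₂, hp₂, hl₂⟩ := shortcycle hdet F hF' wt (-1) _ r b le_rfl hb hb0
      refine one r₂ b₂ hb₂ hl₂ (by rintro h; simp [h] at hp₂) ?_
      intro q d hd _
      have := hnp q d hd
      nlinarith
    · obtain ⟨π', h1, h2, h3⟩ := loopfree hdet F hF' (s := s) (s' := s')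
        (fun π' => wsum wt π' = wsum wt π)
        (by
          intro a b c r ha hb hc hne hi
          have e1 := hnp _ _ hb
          have e2 : ¬ 0 < (-1 : ℤ) * wsum wt b := fun h => hnegc ⟨_, _, hb, h⟩
          simp only [wsum_append] at hi ⊢
          linarith) π.length π le_rfl hπ rfl
      exact ⟨s', π', [], [], 0, walk_mono hRVR h1, rfl, rfl, by simp [wsum_nil, h2],
        by simp; omega, by simp⟩

/-- configuration steps -/
def CR (R : S → α → S → Prop) (wt : α → ℤ) : S × ℤ → α → S × ℤ → Prop :=
  fun x a y => R x.1 a y.1 ∧ y.2 = x.2 + wt a ∧ 0 ≤ x.2 ∧ 0 ≤ y.2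

def CW (R : S → α → S → Prop) (wt : α → ℤ) (W : ℤ) : S × ℤ → α → S × ℤ → Prop :=
  fun x a y => CR R wt x a y ∧ x.2 ≤ W ∧ y.2 ≤ W

theorem cr_walk {R : S → α → S → Prop} {wt : α → ℤ} {x y : S × ℤ} {π : List α}
    (h : Walk (CR R wt) x y π) : Walk R x.1 y.1 π ∧ y.2 = x.2 + wsum wt π := by
  induction π generalizing x with
  | nil => simp [Walk] at h ⊢; simp [h, wsum_nil]
  | cons a l ih =>
    obtain ⟨m, h1, h2⟩ := h
    obtain ⟨h3, h4⟩ := ih h2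
    refine ⟨⟨m.1, h1.1, h3⟩, ?_⟩
    rw [h4, h1.2.1, wsum_cons, add_assoc]

theorem cr_of_start {R : S → α → S → Prop} {wt : α → ℤ} (M : ℕ)
    (hM : ∀ s a s', R s a s' → |wt a| ≤ M) {s s' : S} {u : ℤ} {π : List α}
    (h : Walk R s s' π) (hu : (π.length : ℤ) * M ≤ u) :
    Walk (CR R wt) (s, u) (s', u + wsum wt π) π := by
  induction π generalizing s u with
  | nil => simp [Walk] at h ⊢; simp [h, wsum_nil]
  | cons a l ih =>
    obtain ⟨m, h1, h2⟩ := h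
    have e1 := abs_le.1 (hM _ _ _ h1)
    simp only [List.length_cons] at hu; push_cast at hu
    have e2 : (0 : ℤ) ≤ l.length * M := by positivity
    have e3 : (l.length : ℤ) * M ≤ u + wt a := by linarith
    have := ih h2 e3
    refine ⟨(m, u + wt a), ⟨h1, rfl, by simp; linarith, by simp; linarith⟩, ?_⟩
    rw [wsum_cons, ← add_assoc]; exact this

theorem cr_of_end {R : S → α → S → Prop} {wt : α → ℤ} (M : ℕ)
    (hM : ∀ s a s', R s a s' → |wt a| ≤ M) {s s' : S} {u : ℤ} {π : List α}
    (h : Walk R s s' π) (hu : (π.length : ℤ) * M ≤ u + wsum wt π) :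
    Walk (CR R wt) (s, u) (s', u + wsum wt π) π := by
  induction π generalizing s u with
  | nil => simp [Walk] at h ⊢; simp [h, wsum_nil]
  | cons a l ih =>
    obtain ⟨m, h1, h2⟩ := h
    have e1 := abs_le.1 (hM _ _ _ h1)
    have e4 := abs_le.1 (wsum_bound wt M hM h2)
    simp only [List.length_cons, wsum_cons] at hu; push_cast at hu
    have e3 : (l.length : ℤ) * M ≤ (u + wt a) + wsum wt l := by
      have : (0 : ℤ) ≤ M := by positivity
      linarith
    have := ih h2 e3
    refine ⟨(m, u + wt a), ⟨h1, rfl, by simp; linarith, by simp; linarith⟩, ?_⟩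
    rw [wsum_cons, ← add_assoc]; exact this

theorem cr_pow {R : S → α → S → Prop} {wt : α → ℤ} (M : ℕ)
    (hM : ∀ s a s', R s a s' → |wt a| ≤ M) {s : S} {b : List α}
    (h : Walk R s s b) (e : ℕ) : ∀ u : ℤ, (b.length : ℤ) * M ≤ u →
    (b.length : ℤ) * M ≤ u + e * wsum wt b →
    Walk (CR R wt) (s, u) (s, u + e * wsum wt b) (List.replicate e b).flatten := by
  induction e with
  | zero => intro u _ _; simp [Walk]
  | succ e ih =>
    intro u h1 h2
    push_cast at h2
    rw [List.replicate_succ, List.flatten_cons]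
    refine walk_append.2 ⟨_, cr_of_start M hM h h1, ?_⟩
    have h3 : (b.length : ℤ) * M ≤ u + wsum wt b := by
      rcases le_total 0 (wsum wt b) with h0 | h0
      · linarith
      · nlinarith
    have := ih (u + wsum wt b) h3 (by linarith)
    convert this using 2
    push_cast; ring

theorem split_first {R : S → α → S → Prop} {wt : α → ℤ} (M : ℕ)
    (hM : ∀ s a s', R s a s' → |wt a| ≤ M) (H : ℤ) {y : S × ℤ} {π : List α} :
    ∀ {x : S × ℤ}, Walk (CR R wt) x y π → Walk (CW R wt (H + M)) x y π ∨
      ∃ a c m, π = a ++ c ∧ H ≤ m.2 ∧ Walk (CW R wt (H + M)) x m a ∧ Walk (CR R wt) m y c := by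
  induction π with
  | nil => intro x h; exact Or.inl h
  | cons a l ih =>
    intro x h
    by_cases hx : H ≤ x.2
    · exact Or.inr ⟨[], a :: l, x, rfl, hx, rfl, h⟩
    obtain ⟨m, h1, h2⟩ := h
    have e := abs_le.1 (hM _ _ _ h1.1)
    have hs : CW R wt (H + M) x a m := ⟨h1, by linarith, by rw [h1.2.1]; linarith⟩
    rcases ih h2 with h3 | ⟨a', c, m', e1, e2, e3, e4⟩
    · exact Or.inl ⟨m, hs, h3⟩
    · exact Or.inr ⟨a :: a', c, m', by simp [e1], e2, ⟨m, hs, e3⟩, e4⟩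

theorem split_last {R : S → α → S → Prop} {wt : α → ℤ} (M : ℕ)
    (hM : ∀ s a s', R s a s' → |wt a| ≤ M) (H : ℤ) {y : S × ℤ} {π : List α} :
    ∀ {x : S × ℤ}, Walk (CR R wt) x y π → (Walk (CW R wt (H + M)) x y π ∧ x.2 < H) ∨
      ∃ a c m, π = a ++ c ∧ H ≤ m.2 ∧ Walk (CR R wt) x m a ∧ Walk (CW R wt (H + M)) m y c := by
  induction π with
  | nil =>
    intro x h
    by_cases hx : H ≤ x.2
    · exact Or.inr ⟨[], [], x, rfl, hx, rfl, h⟩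
    · exact Or.inl ⟨h, by linarith⟩
  | cons a l ih =>
    intro x h
    obtain ⟨m, h1, h2⟩ := h
    rcases ih h2 with ⟨h3, h4⟩ | ⟨a', c, m', e1, e2, e3, e4⟩
    · have e := abs_le.1 (hM _ _ _ h1.1)
      have e' := h1.2.1
      have hM0 : (0 : ℤ) ≤ M := by positivity
      have hs : CW R wt (H + M) x a m := ⟨h1, by linarith, by linarith⟩
      by_cases hx : H ≤ x.2
      · exact Or.inr ⟨[], a :: l, x, rfl, hx, rfl, m, hs, h3⟩
      · exact Or.inl ⟨⟨m, hs, h3⟩, by linarith⟩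
    · exact Or.inr ⟨a :: a', c, m', by simp [e1], e2, ⟨m, h1, e3⟩, e4⟩

theorem cw_short {R : S → α → S → Prop} (hR : Det R) (F : Finset S)
    (hF : ∀ s a s', R s a s' → s ∈ F) {wt : α → ℤ} (W : ℕ) {x y : S × ℤ} {π : List α}
    (h : Walk (CW R wt W) x y π) :
    ∃ π', Walk (CR R wt) x y π' ∧ π'.length ≤ F.card * (W + 1) := by
  have hdet : Det (CW R wt W) := by
    intro s a m m' h1 h2
    exact Prod.ext (hR _ _ _ _ h1.1.1 h2.1.1) (h1.1.2.1.trans h2.1.2.1.symm)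
  obtain ⟨π', h1, -, h2⟩ := loopfree hdet (F ×ˢ Finset.Icc (0 : ℤ) W)
    (by
      intro s a s' h
      simp only [Finset.mem_product, Finset.mem_Icc]
      exact ⟨hF _ _ _ h.1.1, h.1.2.2.1, h.2.1⟩) (s := x) (s' := y)
    (fun _ => True) (by simp) π.length π le_rfl h trivial
  refine ⟨π', walk_mono (fun _ _ _ h => h.1) h1, ?_⟩
  rw [Finset.card_product, Int.card_Icc] at h2
  convert h2 using 2
  omega

theorem onedim {R : S → α → S → Prop} (hR : Det R) (F : Finset S)
    (hF : ∀ s a s', R s a s' → s ∈ F) (wt : α → ℤ) (M : ℕ)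
    (hM : ∀ s a s', R s a s' → |wt a| ≤ M) {x y : S × ℤ} {π : List α}
    (h : Walk (CR R wt) x y π) (L H : ℕ)
    (hL : L = 3 * (F.card * (F.card * M) ^ 2) + F.card) (hH : H = L * M + F.card * M) :
    ∃ (r : S) (a b c : List α) (e : ℕ), Walk R x.1 r a ∧ Walk R r r b ∧ Walk R r y.1 c ∧
      Walk (CR R wt) x y (a ++ ((List.replicate e b).flatten ++ c)) ∧
      a.length + (b.length + c.length) ≤ 2 * (F.card * (H + M + 1)) + L + F.card := by
  rcases split_first M hM H h with h1 | ⟨π₁, π₂, m₁, -, hm₁, h1, h2⟩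
  · obtain ⟨π', h2, h3⟩ := cw_short hR F hF (H + M) (by exact_mod_cast h1)
    refine ⟨y.1, π', [], [], 0, (cr_walk h2).1, rfl, rfl, by simpa using h2, ?_⟩
    simp; omega
  · rcases split_last M hM H h2 with ⟨-, h3⟩ | ⟨ρ, π₃, m₂, -, hm₂, h3, h4⟩
    · omega
    obtain ⟨p, hp1, hp2⟩ := cw_short hR F hF (H + M) (by exact_mod_cast h1)
    obtain ⟨q, hq1, hq2⟩ := cw_short hR F hF (H + M) (by exact_mod_cast h4)
    obtain ⟨h5, h6⟩ := cr_walk h3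
    obtain ⟨r, a, b, c, e, ha, hb, hc, hw, hl, hbl⟩ := zlemma hR F hF wt M hM h5
    rw [← hL] at hl
    have ba := abs_le.1 (wsum_bound wt M hM ha)
    have bc := abs_le.1 (wsum_bound wt M hM hc)
    have hHz : (H : ℤ) = L * M + F.card * M := by exact_mod_cast hH
    have l1 : (a.length : ℤ) * M + c.length * M ≤ L * M := by
      rw [← add_mul]; gcongr; exact_mod_cast hl
    have l2 : (b.length : ℤ) * M ≤ F.card * M := by gcongr
    have z1 : (0 : ℤ) ≤ a.length * M := by positivity
    have z2 : (0 : ℤ) ≤ c.length * M := by positivity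
    have z3 : (0 : ℤ) ≤ b.length * M := by positivity
    have s1 := cr_of_start M hM ha (u := m₁.2) (by linarith)
    have s2 := cr_pow M hM hb e (m₁.2 + wsum wt a) (by linarith) (by linarith)
    have s3 := cr_of_end M hM hc (u := m₁.2 + wsum wt a + e * wsum wt b) (by linarith)
    have e2 : m₁.2 + wsum wt a + e * wsum wt b + wsum wt c = m₂.2 := by linarith
    rw [e2] at s3
    refine ⟨r, p ++ a, b, c ++ q, e, walk_append.2 ⟨_, (cr_walk hp1).1, ha⟩, hb,
      walk_append.2 ⟨_, hc, (cr_walk hq1).1⟩, ?_, ?_⟩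
    · rw [List.append_assoc]
      exact walk_append.2 ⟨_, hp1, walk_append.2 ⟨_, s1, walk_append.2 ⟨_, s2,
        walk_append.2 ⟨_, s3, hq1⟩⟩⟩⟩
    · simp only [List.length_append]; omega

end Abstract

section Concrete

theorem disp_nil {d : ℕ} : disp ([] : List (Trans d)) = 0 := rfl
theorem disp_cons {d : ℕ} (t : Trans d) (l : List (Trans d)) :
    disp (t :: l) = t.2.1 + disp l := by simp [disp]

theorem run_nil {d : ℕ} {T : Finset (Trans d)} {A : Set (Vec d)} {p q : ℕ} {u v : Vec d} :
    Run T A p u q v [] ↔ p = q ∧ u ∈ A ∧ v = u := by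
  simp only [Run, IsPathFrom, disp_nil, add_zero]
  constructor
  · rintro ⟨-, h1, h2, h3, -⟩; exact ⟨h1, h2, h3⟩
  · rintro ⟨h1, h2, h3⟩
    exact ⟨by simp, h1, h2, h3, by intro i h1 h2; simp at h2; omega⟩

theorem run_cons {d : ℕ} {T : Finset (Trans d)} {A : Set (Vec d)} {p q : ℕ} {u v : Vec d}
    {t : Trans d} {l : List (Trans d)} :
    Run T A p u q v (t :: l) ↔
      t ∈ T ∧ t.1 = p ∧ u ∈ A ∧ Run T A t.2.2 (u + t.2.1) q v l := by
  constructor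
  · rintro ⟨h1, h2, h3, h4, h5⟩
    refine ⟨h1 t (by simp), h2.1, h3, fun x hx => h1 x (by simp [hx]), h2.2, ?_, ?_, ?_⟩
    · have := h5 1 le_rfl (by simp)
      simpa [disp_cons, disp_nil] using this
    · rw [h4, disp_cons, add_assoc]
    · intro i hi1 hi2
      have := h5 (i + 1) (by omega) (by simpa using hi2)
      rw [List.take_succ_cons, disp_cons, ← add_assoc] at this
      exact this
  · rintro ⟨h1, h2, h3, h4, h5, h6, h7, h8⟩
    refine ⟨?_, ⟨h2, h5⟩, h3, ?_, ?_⟩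
    · intro x hx
      rcases List.mem_cons.1 hx with rfl | hx
      · exact h1
      · exact h4 x hx
    · rw [h7, disp_cons, add_assoc]
    · intro i hi1 hi2
      obtain ⟨k, rfl⟩ : ∃ k, i = k + 1 := ⟨i - 1, by omega⟩
      rw [List.take_succ_cons, disp_cons, ← add_assoc]
      rcases Nat.eq_zero_or_pos k with rfl | hk
      · simpa [disp_nil] using h6
      · exact h8 k hk (by simpa using hi2)

/-- The finite-state relation obtained by storing the bounded coordinate `j`. -/
def BR (T : Finset (Trans 2)) (D : ℕ) (j : Fin 2) : ℕ × ℤ → Trans 2 → ℕ × ℤ → Prop :=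
  fun s t s' => t ∈ T ∧ t.1 = s.1 ∧ t.2.2 = s'.1 ∧ s'.2 = s.2 + t.2.1 j ∧
    0 ≤ s.2 ∧ s.2 ≤ D ∧ 0 ≤ s'.2 ∧ s'.2 ≤ D

def GB (D : ℕ) (i j : Fin 2) : Set (Vec 2) := {v | 0 ≤ v i ∧ 0 ≤ v j ∧ v j ≤ (D : ℤ)}

theorem run_mem {d : ℕ} {T : Finset (Trans d)} {A : Set (Vec d)} {p q : ℕ} {u v : Vec d}
    {l : List (Trans d)} (h : Run T A p u q v l) : u ∈ A := h.2.2.1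

theorem run_iff {T : Finset (Trans 2)} {D : ℕ} {i j : Fin 2} (hij : ∀ k, k = i ∨ k = j)
    {q : ℕ} {v : Vec 2} {π : List (Trans 2)} : ∀ {p : ℕ} {u : Vec 2}, u ∈ GB D i j →
    (Run T (GB D i j) p u q v π ↔
      Walk (CR (BR T D j) (fun t => t.2.1 i)) ((p, u j), u i) ((q, v j), v i) π) := by
  induction π with
  | nil =>
    intro p u hu
    rw [run_nil]
    simp only [Walk, Prod.mk.injEq]
    constructor
    · rintro ⟨h1, -, rfl⟩; exact ⟨⟨h1, rfl⟩, rfl⟩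
    · rintro ⟨⟨h1, h2⟩, h3⟩
      refine ⟨h1, hu, funext fun k => ?_⟩
      rcases hij k with rfl | rfl
      · exact h3.symm
      · exact h2.symm
  | cons t l ih =>
    intro p u hu
    rw [run_cons]
    constructor
    · rintro ⟨h1, h2, -, h4⟩
      have hm := run_mem h4
      refine ⟨((t.2.2, (u + t.2.1) j), (u + t.2.1) i), ?_, (ih hm).1 h4⟩
      exact ⟨⟨h1, h2, rfl, rfl, hu.2.1, hu.2.2, hm.2.1, hm.2.2⟩, rfl, hu.1, hm.1⟩
    · rintro ⟨⟨⟨p', y⟩, x⟩, ⟨⟨h1, h2, h3, h4, -, -, h5, h6⟩, h7, -, h8⟩, h9⟩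
      simp only at h3 h4 h5 h6 h7 h8
      subst h3 h4 h7
      have hm : u + t.2.1 ∈ GB D i j := ⟨h8, h5, h6⟩
      exact ⟨h1, h2, hu, (ih hm).2 h9⟩

theorem br_path {T : Finset (Trans 2)} {D : ℕ} {j : Fin 2} {π : List (Trans 2)} :
    ∀ {s s' : ℕ × ℤ}, Walk (BR T D j) s s' π →
      (∀ t ∈ π, t ∈ T) ∧ IsPathFrom s.1 s'.1 π := by
  induction π with
  | nil => intro s s' h; simp [Walk] at h; simp [IsPathFrom, h]
  | cons t l ih =>
    rintro s s' ⟨m, h1, h2⟩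
    obtain ⟨h3, h4⟩ := ih h2
    refine ⟨?_, h1.2.1.symm ▸ rfl, ?_⟩
    · intro x hx
      rcases List.mem_cons.1 hx with rfl | hx
      · exact h1.1
      · exact h3 x hx
    · rw [h1.2.2.1]; exact h4

theorem wt_le {T : Finset (Trans 2)} {t : Trans 2} (ht : t ∈ T) (i : Fin 2) :
    |t.2.1 i| ≤ (tnorm T : ℤ) := by
  have h1 : (t.2.1 i).natAbs ≤ vnorm t.2.1 :=
    Finset.le_sup (f := fun i => (t.2.1 i).natAbs) (Finset.mem_univ i)
  have h2 : vnorm t.2.1 ≤ tnorm T := Finset.le_sup (f := fun t : Trans 2 => vnorm t.2.1) ht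
  rw [Int.abs_eq_natAbs]
  exact_mod_cast h1.trans h2

theorem words_finite (T : Finset (Trans 2)) (n : ℕ) :
    {l : List (Trans 2) | (∀ t ∈ l, t ∈ T) ∧ l.length ≤ n}.Finite := by
  refine ((List.finite_length_le T n).image (List.map Subtype.val)).subset ?_
  rintro l ⟨h1, h2⟩
  refine ⟨l.attach.map fun x => ⟨x.1, h1 _ x.2⟩, by simpa using h2, ?_⟩
  rw [List.map_map]; exact List.attach_map_subtype_val l

theorem lps_finite (T : Finset (Trans 2)) (n : ℕ) :
    {ρ : LPS 2 | (∃ p q, IsLPSFrom T p q ρ) ∧ lpsLen ρ ≤ n ∧ numCycles ρ ≤ 1}.Finite := by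
  have hW := words_finite T n
  refine ((hW.image (fun a => ((a, []) : LPS 2))).union
    ((hW.prod (hW.prod hW)).image (fun x => ((x.1, [(x.2.1, x.2.2)]) : LPS 2)))).subset ?_
  rintro ⟨a, l⟩ ⟨⟨p, q, h1, -, -⟩, h2, h3⟩
  match l, h1, h2, h3 with
  | [], h1, h2, _ =>
    left
    simp [lpsLen, lpsSupport] at h1 h2
    exact ⟨a, ⟨by simpa using h1, h2⟩, rfl⟩
  | [(b, c)], h1, h2, _ =>
    right
    simp [lpsLen, lpsSupport] at h1 h2
    refine ⟨(a, b, c), ⟨⟨?_, by simp; omega⟩, ⟨?_, by simp; omega⟩, ⟨?_, by simp; omega⟩⟩, rfl⟩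
    · intro t ht; obtain ⟨x, y, z⟩ := t; exact h1 _ _ _ (Or.inl ht)
    · intro t ht; obtain ⟨x, y, z⟩ := t; exact h1 _ _ _ (Or.inr (Or.inl ht))
    · intro t ht; obtain ⟨x, y, z⟩ := t; exact h1 _ _ _ (Or.inr (Or.inr ht))
  | _ :: _ :: _, _, _, h3 => simp [numCycles] at h3

theorem arith (X Qc M D N L H : ℕ) (hX : X = Qc + M + D + 2) (hN : N = Qc * (D + 1))
    (hL : L = 3 * (N * (N * M) ^ 2) + N) (hH : H = L * M + N * M) :
    2 * (N * (H + M + 1)) + L + N ≤ X ^ 18 := by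
  have h2 : 2 ≤ X := by omega
  have p : ∀ a b : ℕ, a ≤ b → X ^ a ≤ X ^ b := fun a b h => Nat.pow_le_pow_right (by omega) h
  have dbl : ∀ a : ℕ, 2 * X ^ a ≤ X ^ (a + 1) := fun a => by
    rw [pow_succ, mul_comm]; exact Nat.mul_le_mul_left _ h2
  have hM1 : M + 1 ≤ X := by omega
  have hM : M ≤ X := by omega
  have hN2 : N ≤ X ^ 2 := by
    rw [hN, sq]; exact Nat.mul_le_mul (by omega) (by omega)
  have hL1 : N * (N * M) ^ 2 ≤ X ^ 8 := by
    calc N * (N * M) ^ 2 ≤ X ^ 2 * (X ^ 2 * X) ^ 2 := by gcongr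
      _ = X ^ 8 := by ring
  have hL2 : L ≤ X ^ 10 := by
    have := p 2 8 (by norm_num)
    have : 2 * X ^ 8 ≤ X ^ 9 := dbl 8
    have : 2 * X ^ 9 ≤ X ^ 10 := dbl 9
    omega
  have hH2 : H ≤ X ^ 12 := by
    have a1 : L * M ≤ X ^ 10 * X := by gcongr
    have a2 : N * M ≤ X ^ 2 * X := by gcongr
    have a3 : X ^ 10 * X = X ^ 11 := by ring
    have a4 : X ^ 2 * X = X ^ 3 := by ring
    have := p 3 11 (by norm_num)
    have : 2 * X ^ 11 ≤ X ^ 12 := dbl 11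
    omega
  have h3 : H + M + 1 ≤ X ^ 13 := by
    have this12 := p 1 12 (by norm_num)
    have : 2 * X ^ 12 ≤ X ^ 13 := dbl 12
    rw [pow_one] at this12
    omega
  have h4 : N * (H + M + 1) ≤ X ^ 15 := by
    calc N * (H + M + 1) ≤ X ^ 2 * X ^ 13 := by gcongr
      _ = X ^ 15 := by ring
  have : 2 * X ^ 15 ≤ X ^ 16 := dbl 15
  have : 2 * X ^ 16 ≤ X ^ 17 := dbl 16
  have : 2 * X ^ 17 ≤ X ^ 18 := dbl 17
  have := p 10 16 (by norm_num)
  have := p 2 16 (by norm_num)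
  omega

theorem band_main (Q : Finset ℕ) (T : Finset (Trans 2))
    (hQ : ∀ t ∈ T, t.1 ∈ Q ∧ t.2.2 ∈ Q) (D : ℕ) (i j : Fin 2) (hij : ∀ k, k = i ∨ k = j) :
    ∃ Y : Finset (LPS 2),
        (∀ ρ ∈ Y, ∃ p q, IsLPSFrom T p q ρ) ∧
        (∀ p ∈ Q, ∀ q ∈ Q, ∀ u v : Vec 2, u ∈ GB D i j → v ∈ GB D i j →
          (Reach T (GB D i j) p u q v ↔ SReach T Y (GB D i j) p u q v)) ∧
        (∀ ρ ∈ Y, lpsLen ρ ≤ (Q.card + tnorm T + D + 2) ^ 18) ∧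
        (∀ ρ ∈ Y, numCycles ρ ≤ 1) := by
  have hfin := lps_finite T ((Q.card + tnorm T + D + 2) ^ 18)
  refine ⟨hfin.toFinset, ?_, ?_, ?_, ?_⟩
  · intro ρ hρ; exact ((hfin.mem_toFinset).1 hρ).1
  · intro p hp q hq u v hu hv
    constructor
    · rintro ⟨π, hπ⟩
      rw [run_iff hij hu] at hπ
      have hdet : Det (BR T D j) := by
        rintro s t m m' ⟨-, -, h1, h2, -⟩ ⟨-, -, h3, h4, -⟩
        exact Prod.ext (h1.symm.trans h3) (h2.trans h4.symm)
      have hF : ∀ s t s', BR T D j s t s' → s ∈ Q ×ˢ Finset.Icc (0 : ℤ) D := by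
        rintro s t s' ⟨h1, h2, h3, h4, h5, h6, -⟩
        simp only [Finset.mem_product, Finset.mem_Icc]
        exact ⟨h2 ▸ (hQ t h1).1, h5, h6⟩
      obtain ⟨r, a, b, c, e, ha, hb, hc, hw, hl⟩ := onedim hdet _ hF (fun t => t.2.1 i) (tnorm T)
        (fun s t s' h => wt_le h.1 i) hπ _ _ rfl rfl
      have hcard : (Q ×ˢ Finset.Icc (0 : ℤ) D).card = Q.card * (D + 1) := by
        rw [Finset.card_product, Int.card_Icc]; congr 1
      have hlen := hl.trans (arith _ Q.card (tnorm T) D _ _ _ rfl hcard rfl rfl)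
      rw [← run_iff hij hu] at hw
      by_cases hb0 : b = []
      · subst hb0
        have hac := br_path (walk_append.2 ⟨r, ha, hc⟩)
        refine ⟨(a ++ c, []), ?_, a ++ c, ⟨[], rfl, by simp [lpsWord]⟩, by simpa using hw⟩
        rw [hfin.mem_toFinset]
        refine ⟨⟨p, q, by simpa [lpsSupport] using hac.1, by simpa [lpsSupport] using hac.2,
          by simp⟩, ?_, by simp [numCycles]⟩
        simpa [lpsLen, lpsSupport] using hlen
      · have hac := br_path (walk_append.2 ⟨r, ha, walk_append.2 ⟨r, hb, hc⟩⟩)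
        have hsup : lpsSupport ((a, [(b, c)]) : LPS 2) = a ++ (b ++ c) := by simp [lpsSupport]
        refine ⟨(a, [(b, c)]), ?_, _, ⟨[e], rfl, by simp [lpsWord]⟩, hw⟩
        rw [hfin.mem_toFinset]
        refine ⟨⟨p, q, by rw [hsup]; exact hac.1, by rw [hsup]; exact hac.2, ?_⟩, ?_,
          by simp [numCycles]⟩
        · intro s hs
          simp at hs
          subst hs
          exact ⟨hb0, r.1, (br_path hb).2⟩
        · rw [lpsLen, hsup]; simpa using hlen
    · rintro ⟨ρ, -, π, -, h⟩; exact ⟨π, h⟩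
  · intro ρ hρ; exact ((hfin.mem_toFinset).1 hρ).2.1
  · intro ρ hρ; exact ((hfin.mem_toFinset).1 hρ).2.2

end Concrete

/-- Reachability of a 2-VASS restricted to a band
`B ∈ {ℕ×[0,D], [0,D]×ℕ}` is captured by a finite set of linear path schemes of
polynomial length with at most one cycle. -/
theorem statement11 :
    ∃ c : ℕ, ∀ (Q : Finset ℕ) (T : Finset (Trans 2)),
      (∀ t ∈ T, t.1 ∈ Q ∧ t.2.2 ∈ Q) →
      ∀ D : ℕ, ∀ B : Set (Vec 2), (B = HBand D ∨ B = VBand D) →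
      ∃ Y : Finset (LPS 2),
        (∀ ρ ∈ Y, ∃ p q, IsLPSFrom T p q ρ) ∧
        (∀ p ∈ Q, ∀ q ∈ Q, ∀ u v : Vec 2, u ∈ B → v ∈ B →
          (Reach T B p u q v ↔ SReach T Y B p u q v)) ∧
        (∀ ρ ∈ Y, lpsLen ρ ≤ (Q.card + tnorm T + D + 2) ^ c) ∧
        (∀ ρ ∈ Y, numCycles ρ ≤ 1) := by
  refine ⟨18, fun Q T hQ D B hB => ?_⟩
  have hH : HBand D = GB D 0 1 := rfl
  have hV : VBand D = GB D 1 0 := by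
    ext v; simp only [VBand, GB, Set.mem_ofPred_eq]; tauto
  rcases hB with rfl | rfl
  · rw [hH]; exact band_main Q T hQ D 0 1 (by decide)
  · rw [hV]; exact band_main Q T hQ D 1 0 (by decide)

end VASS
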